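/- Let d ≥ 2, let σ > 1 be rational with q an integer such that both q and q^σ are integer powers of 2, and suppose c_0 q^{σ−1} exceeds a fixed dimensional constant, where c_0 is the dimensional constant from the analysis of F[q;σ]. Define E_1 := F[q;σ], E_n := ∪_{p ∈ ℤ_q^d} (p/q + q^{−σ} E_{n−1}) for n ≥ 2, and E* := ∩_{n=1}^∞ E_n. Then for every a > 0, the interval [0, a) is NOT contained in Δ(E*). -/

import Mathlib

open MeasureTheory Set Metric Filter
open scoped ENNReal NNReal Topology

noncomputable section

abbrev Euc (d : ℕ) : Type := EuclideanSpace ℝ (Fin d)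

/-- The closed unit cube `[0,1]^d`. -/
def unitCube (d : ℕ) : Set (Euc d) := {x | ∀ i, x i ∈ Icc (0:ℝ) 1}

/-- The distance set `Δ(E,F) = {|x-y| : x ∈ E, y ∈ F}`. -/
def distSet {d : ℕ} (E F : Set (Euc d)) : Set ℝ :=
  {t | ∃ x ∈ E, ∃ y ∈ F, dist x y = t}

/-- `Q` is a dyadic cube of side length `l`, i.e. `Q = 2^{-k}(m + [0,1]^d)`. -/
def IsDyadicCube {d : ℕ} (Q : Set (Euc d)) (l : ℝ) : Prop :=
  ∃ (k : ℤ) (m : Fin d → ℤ), l = (2:ℝ) ^ (-k) ∧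
    Q = {x | ∀ i, (m i : ℝ) * (2:ℝ) ^ (-k) ≤ x i ∧ x i ≤ ((m i : ℝ) + 1) * (2:ℝ) ^ (-k)}

/-- The `s`-dimensional dyadic Hausdorff content: the infimum of `∑ ℓ(Q_i)^s` over
countable covers of `E` by dyadic cubes. -/
def dyadicContent {d : ℕ} (s : ℝ) (E : Set (Euc d)) : ℝ≥0∞ :=
  ⨅ (Q : ℕ → Set (Euc d)) (l : ℕ → ℝ) (_ : ∀ i, IsDyadicCube (Q i) (l i))
    (_ : E ⊆ ⋃ i, Q i), ∑' i, ENNReal.ofReal (l i ^ s)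

/-- The building block set `F[q;σ] = ⋃_{p ∈ ℤ_q^d} (p/q + q^{-σ}[0,1]^d)`. -/
def Fqs (d q : ℕ) (σ : ℝ) : Set (Euc d) :=
  {x | ∃ p : Fin d → ℕ, (∀ i, p i < q) ∧
    ∀ i, (p i : ℝ) / q ≤ x i ∧ x i ≤ (p i : ℝ) / q + (q : ℝ) ^ (-σ)}

/-- The vector `p/q ∈ ℝ^d` for `p ∈ ℤ_q^d`. -/
def latticePt (d q : ℕ) (p : Fin d → ℕ) : Euc d :=
  (WithLp.equiv 2 (Fin d → ℝ)).symm (fun i => (p i : ℝ) / q)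

/-- The iterates of the self-similar construction: `E_1 = F[q;σ]` and
`E_{n+1} = ⋃_{p ∈ ℤ_q^d} (p/q + q^{-σ} E_n)`; here `iterE d q σ n = E_{n+1}`. -/
def iterE (d q : ℕ) (σ : ℝ) : ℕ → Set (Euc d)
  | 0 => Fqs d q σ
  | n + 1 => ⋃ p ∈ {p : Fin d → ℕ | ∀ i, p i < q},
      (fun x : Euc d => latticePt d q p + (q : ℝ) ^ (-σ) • x) '' iterE d q σ n

/-- The limit set `E* = ⋂_n E_n` of the self-similar construction. -/
def Estar (d q : ℕ) (σ : ℝ) : Set (Euc d) := ⋂ n, iterE d q σ n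

/-!
The distances realised in `P + l • A`, with `P` a `δ`-separated set and `A` of diameter at most `D`,
are either `l` times a distance realised in `A`, or at least `δ - l * D`. Hence if `D < s` and
`l * s < δ - l * D`, then the value `l ^ n * s`, missed by the distances of the `n`-th iterate of
`A ↦ P + l • A`, turns into the value `l ^ (n + 1) * s` missed by those of the next one. The
missing values tend to `0`, and such an `s` exists as soon as `2 * l * D < δ`. For `E*` we have
`l = q ^ (-σ)`, `δ = 1 / q` and `D = √d`.
-/

section SelfSimilar

open scoped Pointwise

variable {V : Type*} [SeminormedAddCommGroup V] [NormedSpace ℝ V]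
  {P A K : Set V} {l δ D s a : ℝ}

/-- The union `⋃ p ∈ P, (p + l • A)` of the copies of `A` scaled by `l` and translated by `P`;
iterating it in `A` is the self-similar construction with equal contraction ratios `l`. -/
def scaledCopies (P : Set V) (l : ℝ) (A : Set V) : Set V := P + l • A

theorem mem_scaledCopies {x : V} :
    x ∈ scaledCopies P l A ↔ ∃ p ∈ P, ∃ z ∈ A, p + l • z = x := by
  simp only [scaledCopies, Set.mem_add, mem_smul_set, exists_exists_and_eq_and]

theorem scaledCopies_mono : Monotone (scaledCopies P l) :=
  fun _ _ h => add_subset_add_left (smul_set_mono h)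

theorem iterate_scaledCopies_subset (hK : scaledCopies P l K ⊆ K) (n : ℕ) :
    (scaledCopies P l)^[n] K ⊆ K := by
  induction n with
  | zero => exact Subset.rfl
  | succ n ih =>
    rw [Function.iterate_succ_apply']
    exact (scaledCopies_mono ih).trans hK

theorem image2_dist_scaledCopies_subset (hl : 0 ≤ l) (hP : P.Pairwise fun p p' => δ ≤ dist p p')
    (hA : image2 dist A A ⊆ Iic D) :
    image2 dist (scaledCopies P l A) (scaledCopies P l A) ⊆
      (l * ·) '' image2 dist A A ∪ Ici (δ - l * D) := by
  rintro _ ⟨x, hx, y, hy, rfl⟩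
  obtain ⟨p, hp, z, hz, rfl⟩ := mem_scaledCopies.1 hx
  obtain ⟨p', hp', w, hw, rfl⟩ := mem_scaledCopies.1 hy
  have dist_smul_eq : dist (l • z) (l • w) = l * dist z w := by
    rw [dist_smul₀, Real.norm_of_nonneg hl]
  rcases eq_or_ne p p' with rfl | hne
  · left
    exact ⟨dist z w, mem_image2_of_mem hz hw, by rw [dist_add_left, dist_smul_eq]⟩
  · right
    have hzw : l * dist z w ≤ l * D :=
      mul_le_mul_of_nonneg_left (hA (mem_image2_of_mem hz hw)) hl
    have reverse_triangle :
        dist p p' ≤ dist (p + l • z) (p' + l • w) + dist (l • z) (l • w) := by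
      simpa only [add_sub_cancel_right] using
        dist_sub_sub_le (p + l • z) (l • z) (p' + l • w) (l • w)
    rw [mem_Ici]
    linarith [hP hp hp' hne]

theorem pow_mul_notMem_image2_dist_iterate (hl₀ : 0 < l) (hl₁ : l ≤ 1)
    (hP : P.Pairwise fun p p' => δ ≤ dist p p') (hK : scaledCopies P l K ⊆ K)
    (hD : image2 dist K K ⊆ Iic D) (hs₀ : 0 ≤ s) (hs : D < s) (hsδ : l * s < δ - l * D) (n : ℕ) :
    l ^ n * s ∉ image2 dist ((scaledCopies P l)^[n] K) ((scaledCopies P l)^[n] K) := by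
  induction n with
  | zero =>
    intro h
    rw [pow_zero, one_mul] at h
    exact hs.not_ge (hD h)
  | succ n ih =>
    have hiter := iterate_scaledCopies_subset hK n
    rw [Function.iterate_succ_apply']
    intro h
    rcases image2_dist_scaledCopies_subset hl₀.le hP ((image2_subset hiter hiter).trans hD) h with
      ⟨t, ht, hlt⟩ | hge
    · have ht_eq : t = l ^ n * s := mul_left_cancel₀ hl₀.ne' (hlt.trans (by ring))
      exact ih (ht_eq ▸ ht)
    · have hle : l ^ (n + 1) * s ≤ l * s :=
        mul_le_mul_of_nonneg_right (pow_le_of_le_one hl₀.le hl₁ n.succ_ne_zero) hs₀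
      exact (hle.trans_lt hsδ).not_ge hge

theorem not_Ico_subset_image2_dist_iInter_iterate (hl₀ : 0 < l) (hl₁ : l < 1)
    (hP : P.Pairwise fun p p' => δ ≤ dist p p') (hK : scaledCopies P l K ⊆ K)
    (hD₀ : 0 ≤ D) (hD : image2 dist K K ⊆ Iic D) (hlD : 2 * D * l < δ) (ha : 0 < a) :
    ¬ Ico 0 a ⊆ image2 dist (⋂ n, (scaledCopies P l)^[n] K) (⋂ n, (scaledCopies P l)^[n] K) := by
  intro hsub
  obtain ⟨s, hDs, hsδ⟩ : ∃ s, D < s ∧ s < δ / l - D :=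
    exists_between (by rw [lt_sub_iff_add_lt, lt_div_iff₀ hl₀]; linarith)
  have hs : 0 < s := hD₀.trans_lt hDs
  have hlsδ : l * s < δ - l * D := by
    rw [lt_sub_iff_add_lt, lt_div_iff₀ hl₀] at hsδ
    linarith
  obtain ⟨n, hn⟩ := exists_pow_lt_of_lt_one (div_pos ha hs) hl₁
  have hmem : l ^ n * s ∈ Ico 0 a := ⟨by positivity, (lt_div_iff₀ hs).1 hn⟩
  exact pow_mul_notMem_image2_dist_iterate hl₀ hl₁.le hP hK hD hs.le hDs hlsδ n
    (image2_subset (iInter_subset _ n) (iInter_subset _ n) (hsub hmem))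

end SelfSimilar

theorem mul_rpow_neg_lt_one_div {c x σ : ℝ} (hx : 0 < x) (h : c < x ^ (σ - 1)) :
    c * x ^ (-σ) < 1 / x :=
  calc c * x ^ (-σ) < x ^ (σ - 1) * x ^ (-σ) := by gcongr
    _ = x ^ (-1 : ℝ) := by rw [← Real.rpow_add hx]; ring_nf
    _ = 1 / x := by rw [Real.rpow_neg_one, one_div]

section Lattice

variable {d q : ℕ} {σ : ℝ}

/-- The grid `ℤ_q^d / q` of translation vectors in the construction of `E*`. -/
def grid (d q : ℕ) : Set (Euc d) := latticePt d q '' {p | ∀ i, p i < q}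

theorem latticePt_apply (p : Fin d → ℕ) (i : Fin d) : latticePt d q p i = (p i : ℝ) / q := rfl

theorem pairwise_one_div_le_dist_grid :
    (grid d q).Pairwise fun x y => 1 / (q : ℝ) ≤ dist x y := by
  rintro _ ⟨p, -, rfl⟩ _ ⟨p', -, rfl⟩ hne
  obtain ⟨i, hi⟩ := Function.ne_iff.1 (ne_of_apply_ne _ hne)
  calc 1 / (q : ℝ) ≤ dist (p i) (p' i) / q := by
        gcongr
        exact Nat.pairwise_one_le_dist hi
    _ = dist (latticePt d q p i) (latticePt d q p' i) := by
        rw [latticePt_apply, latticePt_apply, Real.dist_eq, ← sub_div, abs_div, Nat.abs_cast,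
          Nat.dist_eq]
    _ ≤ dist (latticePt d q p) (latticePt d q p') := PiLp.dist_apply_le _ _ i

theorem image2_dist_unitCube_subset : image2 dist (unitCube d) (unitCube d) ⊆ Iic (√d) := by
  rintro _ ⟨x, hx, y, hy, rfl⟩
  rw [mem_Iic, EuclideanSpace.dist_eq]
  gcongr
  calc ∑ i, dist (x i) (y i) ^ 2 ≤ ∑ _i : Fin d, (1 : ℝ) :=
        Finset.sum_le_sum fun i _ =>
          pow_le_one₀ dist_nonneg (Real.dist_le_of_mem_Icc_01 (hx i) (hy i))
    _ = d := by simp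

theorem Fqs_subset_unitCube (h : (q : ℝ) ^ (-σ) ≤ 1 / q) : Fqs d q σ ⊆ unitCube d := by
  rintro x ⟨p, hp, hx⟩ i
  refine ⟨le_trans (by positivity) (hx i).1, ?_⟩
  have hpq : (p i : ℝ) + 1 ≤ q := mod_cast hp i
  calc x i ≤ (p i : ℝ) / q + (q : ℝ) ^ (-σ) := (hx i).2
    _ ≤ (p i : ℝ) / q + 1 / q := by gcongr
    _ = ((p i : ℝ) + 1) / q := (add_div ..).symm
    _ ≤ 1 := div_le_one_of_le₀ hpq q.cast_nonneg

theorem scaledCopies_grid_unitCube_subset :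
    scaledCopies (grid d q) ((q : ℝ) ^ (-σ)) (unitCube d) ⊆ Fqs d q σ := by
  intro x hx
  obtain ⟨_, ⟨p, hp, rfl⟩, z, hz, rfl⟩ := mem_scaledCopies.1 hx
  have hl : 0 ≤ (q : ℝ) ^ (-σ) := by positivity
  refine ⟨p, hp, fun i => ?_⟩
  rw [PiLp.add_apply, PiLp.smul_apply, latticePt_apply, smul_eq_mul]
  exact ⟨le_add_of_nonneg_right (mul_nonneg hl (hz i).1),
    add_le_add_right (mul_le_of_le_one_right hl (hz i).2) _⟩

theorem iterE_eq_iterate_scaledCopies (n : ℕ) :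
    iterE d q σ n = (scaledCopies (grid d q) ((q : ℝ) ^ (-σ)))^[n] (Fqs d q σ) := by
  induction n with
  | zero => rfl
  | succ n ih =>
    rw [Function.iterate_succ_apply', ← ih]
    ext x
    simp only [iterE, mem_iUnion, mem_image, mem_scaledCopies, grid, exists_prop,
      exists_exists_and_eq_and]

theorem Estar_eq_iInter_iterate_scaledCopies :
    Estar d q σ = ⋂ n, (scaledCopies (grid d q) ((q : ℝ) ^ (-σ)))^[n] (Fqs d q σ) :=
  iInter_congr iterE_eq_iterate_scaledCopies

end Lattice

theorem statement16_general {d q : ℕ} {σ a : ℝ} (hd : d ≠ 0) (h : 2 * √d < (q : ℝ) ^ (σ - 1))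
    (ha : 0 < a) : ¬ Ico 0 a ⊆ distSet (Estar d q σ) (Estar d q σ) := by
  have one_le_sqrt : 1 ≤ √(d : ℝ) := Real.one_le_sqrt.2 (mod_cast Nat.one_le_iff_ne_zero.2 hd)
  have hq : q ≠ 0 := by
    rintro rfl
    rw [Nat.cast_zero] at h
    linarith [Real.zero_rpow_le_one (σ - 1)]
  have hq₀ : 0 < (q : ℝ) := by positivity
  have hlD : 2 * √d * (q : ℝ) ^ (-σ) < 1 / q := mul_rpow_neg_lt_one_div hq₀ h
  have hlq : (q : ℝ) ^ (-σ) < 1 / q := by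
    simpa only [one_mul] using mul_rpow_neg_lt_one_div hq₀ (show 1 < (q : ℝ) ^ (σ - 1) by linarith)
  have hl₁ : (q : ℝ) ^ (-σ) < 1 :=
    hlq.trans_le (div_le_one_of_le₀ (mod_cast Nat.one_le_iff_ne_zero.2 hq) q.cast_nonneg)
  have hcube : Fqs d q σ ⊆ unitCube d := Fqs_subset_unitCube hlq.le
  have hinvariant : scaledCopies (grid d q) ((q : ℝ) ^ (-σ)) (Fqs d q σ) ⊆ Fqs d q σ :=
    (scaledCopies_mono hcube).trans scaledCopies_grid_unitCube_subset
  have hdiam : image2 dist (Fqs d q σ) (Fqs d q σ) ⊆ Iic (√d) :=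
    (image2_subset hcube hcube).trans image2_dist_unitCube_subset
  rw [Estar_eq_iInter_iterate_scaledCopies]
  exact not_Ico_subset_image2_dist_iInter_iterate (by positivity) hl₁
    pairwise_one_div_le_dist_grid hinvariant (Real.sqrt_nonneg _) hdiam hlD ha

/-- Lemma 2.8: for `d ≥ 2` there is a dimensional constant `C > 0` such that for
`σ > 1` rational and `q`, `q^σ` integer powers of 2 with `q^{σ-1} ≥ C`, the distance
set of the self-similar set `E*` contains no interval of the form `[0,a)`. -/
theorem statement16 (d : ℕ) (hd : 2 ≤ d) :
    ∃ C : ℝ, 0 < C ∧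
      ∀ σ : ℝ, 1 < σ → (∃ r : ℚ, (r : ℝ) = σ) →
      ∀ q N₁ N₂ : ℕ, (q : ℝ) = 2 ^ N₁ → (q : ℝ) ^ σ = 2 ^ N₂ →
        C ≤ (q : ℝ) ^ (σ - 1) →
        ∀ a : ℝ, 0 < a →
          ¬ (Ico (0:ℝ) a ⊆ distSet (Estar d q σ) (Estar d q σ)) :=
  ⟨2 * √d + 1, by positivity, fun _ _ _ _ _ _ _ _ hC _ ha =>
    statement16_general (by lia) (by linarith) ha⟩
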